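/- arXiv:2008.10113 — 2 statements merged into one kernel-verified Lean document; each statement's English description precedes it below -/
import Mathlib

section
/- Let $F$ be a dyadic local field with $e = \mathrm{ord}(2)$ and let $a_1, a_2, a_3 \in F^\times$ with $\mathrm{ord}(a_1) = 0$, $\mathrm{ord}(a_2) = -2e$, and $-a_1a_2 \in (F^\times)^2 \cup \Delta(F^\times)^2$. If $\mathrm{ord}(a_3) = 0$ then $[a_1, a_2, a_3]$ is isotropic; if $\mathrm{ord}(a_3) = 1$ then $[a_1, a_2, a_3]$ is isotropic if and only if $[a_1, a_2]$ is isotropic. -/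
noncomputable section

/-- A normalized additive `ℤ`-valued valuation presenting `F` as a dyadic local field
(`F` is a finite extension of `ℚ₂` and `ord` its normalized valuation). -/
structure IsDyadicOrd {F : Type*} [Field F] [Algebra ℚ_[2] F] (ord : F → WithTop ℤ) : Prop where
  map_zero : ord 0 = ⊤
  ne_top : ∀ x : F, x ≠ 0 → ord x ≠ ⊤
  map_mul : ∀ x y : F, ord (x * y) = ord x + ord y
  min_le_add : ∀ x y : F, min (ord x) (ord y) ≤ ord (x + y)
  surj : ∀ n : ℤ, ∃ x : F, ord x = (n : WithTop ℤ)
  compat : ∀ q : ℚ_[2], q ≠ 0 → q.valuation = 0 → ord (algebraMap ℚ_[2] F q) = 0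

/-- The order of the relative quadratic defect `d(a) = ord (a⁻¹ 𝔡(a))`, where
`𝔡(a) = ⋂ₓ (a - x²)𝒪` is the quadratic defect; it is valued in `ℕ∞`
(`d(a) ≥ 0` always, and `d(a) = ⊤` iff `𝔡(a) = 0`, i.e. `a` is a square). -/
def ddefect {F : Type*} [Field F] (ord : F → WithTop ℤ) (a : F) : ℕ∞ :=
  ⨆ x : F, WithTop.map Int.toNat (ord (a⁻¹ * (a - x ^ 2)))

/-- `d(a)` viewed in `WithTop ℤ`. -/
def dz {F : Type*} [Field F] (ord : F → WithTop ℤ) (a : F) : WithTop ℤ :=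
  WithTop.map (Nat.cast : ℕ → ℤ) (ddefect ord a)

/-- The Hilbert symbol `(a,b)_𝔭 = 1` iff `z² = a x² + b y²` has a nontrivial solution. -/
def hilbertSym (F : Type*) [Field F] (a b : F) : ℤ :=
  @ite _ (∃ x y z : F, (x, y, z) ≠ (0, 0, 0) ∧ a * x ^ 2 + b * y ^ 2 = z ^ 2)
    (Classical.propDecidable _) 1 (-1)

/-!
Write `Δ = (1 + 4ρ)d²` with `ρ` a unit. Multiplying by `a₁`, the ternary form is isotropic iff the
binary form is, or `-a₁a₃` is a norm `X² - ΔY²` from the unramified extension `F(√Δ)`; and the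
nonzero norms from it are the elements of even order.

An element of even order is a square times a unit `u`. As the residue field is perfect, `u ≡ p²`
for some `p`, and correcting `p²` to `u` amounts to solving `s² - ps - ρ(p² - u) = 0`, which
Hensel's lemma allows. For `x² + bx + c` with `‖c‖ < ‖b‖²`, Hensel's lemma follows from the spectral
norm: if the quadratic were irreducible, its roots would have equal norms, forcing `‖b‖² ≤ ‖c‖`.

Conversely, up to squares a norm has the form `-(1 + 4ρ - x²)` with `1 + 4ρ - x² = 4ρ - r(r + 2)`
and `r = x - 1`. By the definition of the defect its order is at most `2e`, and below `2e` it is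
the order of `r(r + 2)`, which is then twice the order of `r`.
-/

section SpectralNorm

open Polynomial

variable {K F : Type*} [Field F]

theorem spectralNorm_eq_of_irreducible [NormedField K] [Algebra K F] {L : Type*} [Field L]
    [Algebra K L] [Algebra F L] [IsScalarTower K F L] [Algebra.IsAlgebraic K L] {f : F[X]}
    (hf : Irreducible f) {r s : L} (hr : aeval r f = 0) (hs : aeval s f = 0) :
    spectralNorm K L r = spectralNorm K L s := by
  have hconj : IsConjRoot F r s :=
    (minpoly.eq_of_irreducible hf hr).symm.trans (minpoly.eq_of_irreducible hf hs)
  exact congrArg spectralValue (hconj.of_isScalarTower (Algebra.IsIntegral.isIntegral r))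

theorem spectralNorm_sq_le_of_irreducible [NontriviallyNormedField K] [IsUltrametricDist K]
    [CompleteSpace K] [Algebra K F] [Algebra.IsAlgebraic K F] {b c : F}
    (hirr : Irreducible (X ^ 2 + C b * X + C c : F[X])) :
    spectralNorm K F b ^ 2 ≤ spectralNorm K F c := by
  let L := AlgebraicClosure F
  have : Algebra.IsAlgebraic K L := .trans K F L
  obtain ⟨r, hr⟩ := IsAlgClosed.exists_aeval_eq_zero L _ (degree_pos_of_irreducible hirr).ne'
  obtain ⟨s, hs⟩ : ∃ s : L, r + s = -algebraMap F L b := ⟨_, add_sub_cancel r _⟩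
  have hrs : spectralNorm K L r = spectralNorm K L s := by
    refine spectralNorm_eq_of_irreducible hirr hr ?_
    rw [← hr, eq_sub_of_add_eq' hs]
    simp only [map_add, map_mul, map_pow, aeval_X, aeval_C]
    ring
  have hb : spectralNorm K F b ≤ spectralNorm K L r := calc
    spectralNorm K F b = spectralNorm K L (algebraMap F L b) := spectralNorm.eq_of_tower b
    _ = spectralNorm K L (r + s) := by
      rw [hs, spectralNorm_neg (Algebra.IsAlgebraic.isAlgebraic _)]
    _ ≤ max (spectralNorm K L r) (spectralNorm K L s) := isNonarchimedean_spectralNorm r s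
    _ = spectralNorm K L r := by rw [← hrs, max_self]
  have hc : spectralNorm K F c = spectralNorm K L r ^ 2 := calc
    spectralNorm K F c = spectralNorm K L (algebraMap F L c) := spectralNorm.eq_of_tower c
    _ = spectralNorm K L (r * s) := by
      congr 1
      simp only [map_add, map_mul, map_pow, aeval_X, aeval_C] at hr
      linear_combination hr - r * hs
    _ = spectralNorm K L r ^ 2 := by
      rw [← spectralMulAlgNorm_def, map_mul, spectralMulAlgNorm_def, spectralMulAlgNorm_def,
        ← hrs, sq]
  exact hc ▸ pow_le_pow_left₀ (spectralNorm_nonneg b) hb 2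

theorem exists_quadratic_root_of_spectralNorm_lt [NontriviallyNormedField K]
    [IsUltrametricDist K] [CompleteSpace K] [Algebra K F] [Algebra.IsAlgebraic K F] {b c : F}
    (h : spectralNorm K F c < spectralNorm K F b ^ 2) : ∃ x : F, x ^ 2 + b * x + c = 0 := by
  by_contra! hroot
  have hdeg : (X ^ 2 + C b * X + C c : F[X]).natDegree = 2 := by compute_degree!
  have hirr : Irreducible (X ^ 2 + C b * X + C c : F[X]) :=
    irreducible_of_degree_le_three_of_not_isRoot (by simp [hdeg]) fun x hx ↦
      hroot x (by simpa using hx)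
  exact h.not_ge (spectralNorm_sq_le_of_irreducible hirr)

end SpectralNorm

open IsLocalRing in
theorem exists_pow_sub_mem_maximalIdeal (p : ℕ) [Fact p.Prime] (R : Type*) {A : Type*}
    [CommRing R] [IsLocalRing R] [PerfectField (ResidueField R)] [CharP (ResidueField R) p]
    [CommRing A] [IsLocalRing A] [Algebra R A] [FaithfulSMul R A] [Algebra.IsIntegral R A]
    (x : A) : ∃ y : A, y ^ p - x ∈ maximalIdeal A := by
  have : Algebra.IsIntegral R (ResidueField A) :=
    .of_surjective (IsScalarTower.toAlgHom R A (ResidueField A)) residue_surjective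
  have : Algebra.IsIntegral (ResidueField R) (ResidueField A) := .tower_top R
  have : PerfectField (ResidueField A) := Algebra.IsAlgebraic.perfectField (ResidueField R)
  have : CharP (ResidueField A) p := charP_of_injective_algebraMap' (ResidueField R) p
  have : PerfectRing (ResidueField A) p := PerfectField.toPerfectRing p
  obtain ⟨t, ht⟩ := surjective_frobenius (ResidueField A) p (residue A x)
  obtain ⟨y, rfl⟩ := residue_surjective t
  exact ⟨y, by rw [← residue_eq_zero_iff, map_sub, map_pow, ← ht, frobenius_def, sub_self]⟩

section PadicExtension

open Polynomial IsLocalRing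

variable {F : Type*} [Field F] {Γ : Type*} [LinearOrderedAddCommGroupWithTop Γ]

theorem map_nonneg_of_isIntegral (v : AddValuation F Γ) {R : Type*} [CommRing R]
    [Algebra R F] (hR : ∀ r : R, 0 ≤ v (algebraMap R F r)) {x : F} (hx : IsIntegral R x) :
    0 ≤ v x := by
  algebraize [(algebraMap R F).codRestrict v.toValuation.integer hR]
  have : IsScalarTower R v.toValuation.integer F := .of_algebraMap_eq fun _ ↦ rfl
  exact (Valuation.integer.integers v.toValuation).mem_of_integral hx.tower_top

variable {p : ℕ} [Fact p.Prime] [Algebra ℚ_[p] F] [Algebra.IsAlgebraic ℚ_[p] F]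
  [Algebra ℤ_[p] F] [IsScalarTower ℤ_[p] ℚ_[p] F]

theorem isIntegral_of_spectralNorm_le_one {x : F} (hx : spectralNorm ℚ_[p] F x ≤ 1) :
    IsIntegral ℤ_[p] x := by
  have hmonic : (minpoly ℚ_[p] x).Monic := minpoly.monic (Algebra.IsIntegral.isIntegral x)
  have hlifts : minpoly ℚ_[p] x ∈ lifts (algebraMap ℤ_[p] ℚ_[p]) :=
    (lifts_iff_coeff_lifts _).2 fun n ↦ ⟨⟨_, (spectralValue_le_one_iff hmonic).1 hx n⟩, rfl⟩
  obtain ⟨f, hf, -, hfm⟩ := lifts_and_natDegree_eq_and_monic hlifts hmonic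
  refine ⟨f, hfm, ?_⟩
  rw [← aeval_def, ← aeval_map_algebraMap ℚ_[p], hf, minpoly.aeval]

variable {v : AddValuation F Γ} (hv : ∀ z : ℤ_[p], 0 ≤ v (algebraMap ℤ_[p] F z))
include hv

theorem map_nonneg_of_spectralNorm_le_one {x : F} (hx : spectralNorm ℚ_[p] F x ≤ 1) : 0 ≤ v x :=
  map_nonneg_of_isIntegral v hv (isIntegral_of_spectralNorm_le_one hx)

theorem spectralNorm_lt_one_of_map_pos {x : F} (hx : 0 < v x) : spectralNorm ℚ_[p] F x < 1 := by
  by_contra! hnorm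
  have hx0 : x ≠ 0 := by
    rintro rfl
    exact hnorm.not_gt (by rw [spectralNorm_zero]; exact zero_lt_one)
  have hinv : 0 ≤ v x⁻¹ := by
    refine map_nonneg_of_spectralNorm_le_one hv ?_
    rw [← spectralMulAlgNorm_def, map_inv₀]
    exact inv_le_one_of_one_le₀ hnorm
  exact (add_pos_of_pos_of_nonneg hx hinv).ne' (by rw [← v.map_mul, mul_inv_cancel₀ hx0, v.map_one])

theorem exists_quadratic_root_of_map_sq_lt {b c : F} (h : v (b ^ 2) < v c) :
    ∃ x : F, x ^ 2 + b * x + c = 0 := by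
  have hb : b ^ 2 ≠ 0 := fun hb ↦ by simp [hb] at h
  have hpos : 0 < v (c / b ^ 2) := by
    by_contra! hle
    refine h.not_ge ?_
    calc v c = v (b ^ 2) + v (c / b ^ 2) := by rw [← v.map_mul, mul_div_cancel₀ _ hb]
      _ ≤ v (b ^ 2) := add_le_of_nonpos_right hle
  have hlt : spectralNorm ℚ_[p] F (c / b ^ 2) < 1 := spectralNorm_lt_one_of_map_pos hv hpos
  apply exists_quadratic_root_of_spectralNorm_lt (K := ℚ_[p])
  have hb' : 0 < spectralMulAlgNorm ℚ_[p] F b ^ 2 := by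
    rw [← map_pow]
    exact spectralNorm_zero_lt hb (Algebra.IsAlgebraic.isAlgebraic _)
  rwa [← spectralMulAlgNorm_def, map_div₀, map_pow, div_lt_one hb'] at hlt

variable (hp : 0 < v p)
include hp

theorem map_pos_of_spectralNorm_lt_one {x : F} (hx : spectralNorm ℚ_[p] F x < 1) : 0 < v x := by
  have : CharZero F := Algebra.charZero_of_charZero ℚ_[p] F
  have hpF : (p : F) ≠ 0 := mod_cast (Fact.out : p.Prime).ne_zero
  have hpnorm : 0 < spectralMulAlgNorm ℚ_[p] F p :=
    spectralNorm_zero_lt hpF (Algebra.IsAlgebraic.isAlgebraic _)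
  obtain ⟨n, hn⟩ := exists_pow_lt_of_lt_one hpnorm hx
  have hdiv : 0 ≤ v (x ^ n / p) := by
    refine map_nonneg_of_spectralNorm_le_one hv ?_
    rw [← spectralMulAlgNorm_def, map_div₀, map_pow]
    exact div_le_one_of_le₀ hn.le hpnorm.le
  have hpow : 0 < n • v x := by
    rw [← v.map_pow, ← mul_div_cancel₀ (x ^ n) hpF, v.map_mul]
    exact add_pos_of_pos_of_nonneg hp hdiv
  by_contra! hle
  exact hpow.not_ge (nsmul_nonpos hle n)

theorem isIntegral_of_map_nonneg {x : F} (hx : 0 ≤ v x) : IsIntegral ℤ_[p] x := by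
  refine isIntegral_of_spectralNorm_le_one ?_
  by_contra! hnorm
  have hinv : 0 < v x⁻¹ := by
    refine map_pos_of_spectralNorm_lt_one hv hp ?_
    rw [← spectralMulAlgNorm_def, map_inv₀]
    exact inv_lt_one_of_one_lt₀ hnorm
  have hx0 : x ≠ 0 := by
    rintro rfl
    exact hnorm.not_ge (by rw [spectralNorm_zero]; exact zero_le_one)
  exact (add_pos_of_pos_of_nonneg hinv hx).ne'
    (by rw [← v.map_mul, inv_mul_cancel₀ hx0, v.map_one])

theorem exists_map_pow_sub_pos {u : F} (hu : 0 ≤ v u) : ∃ y : F, 0 < v (y ^ p - u) := by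
  let A := v.toValuation.valuationSubring
  algebraize [(algebraMap ℤ_[p] F).codRestrict A hv]
  have : IsScalarTower ℤ_[p] A F := .of_algebraMap_eq fun _ ↦ rfl
  have : Algebra.IsIntegral ℤ_[p] A := ⟨fun x ↦
    (isIntegral_algebraMap_iff (FaithfulSMul.algebraMap_injective A F)).1
      (isIntegral_of_map_nonneg hv hp x.2)⟩
  have : FaithfulSMul ℤ_[p] F := .trans ℤ_[p] ℚ_[p] F
  have : FaithfulSMul ℤ_[p] A := .tower_bot ℤ_[p] A F
  have : Finite (ResidueField ℤ_[p]) := .of_equiv _ PadicInt.residueField.symm.toEquiv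
  have : CharP (ResidueField ℤ_[p]) p :=
    (RingHom.charP_iff PadicInt.residueField.toRingHom PadicInt.residueField.injective p).2
      inferInstance
  obtain ⟨y, hy⟩ := exists_pow_sub_mem_maximalIdeal p ℤ_[p] (⟨u, hu⟩ : A)
  exact ⟨y, (v.toValuation.mem_maximalIdeal_iff).1 hy⟩

end PadicExtension

section QuadraticDefect

variable {F : Type*} [Field F] {v : AddValuation F (WithTop ℤ)} {e : ℕ} {ρ : F}

theorem map_four_of_map_two (h2 : v 2 = (e : ℤ)) : v 4 = ((2 * e : ℕ) : ℤ) := by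
  rw [show (4 : F) = 2 ^ 2 by norm_num, v.map_pow, h2]
  norm_cast

theorem even_of_map_sub_sq (h2 : v 2 = (e : ℤ)) (hρ : 0 ≤ v ρ)
    (hdefect : ∀ x, v (1 + 4 * ρ - x ^ 2) ≤ v 4) {x : F} {n : ℤ}
    (hn : v (1 + 4 * ρ - x ^ 2) = n) : Even n := by
  have h4 : v 4 = (2 * e : ℤ) := map_four_of_map_two h2
  have hle : n ≤ 2 * e := by
    have hle := hdefect x
    rw [hn, h4] at hle
    exact_mod_cast hle
  obtain rfl | hlt := hle.eq_or_lt
  · exact even_two_mul _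
  obtain ⟨r, rfl⟩ : ∃ r, x = r + 1 := ⟨x - 1, (sub_add_cancel x 1).symm⟩
  have hr2 : v (r * (r + 2)) = n := by
    rw [show r * (r + 2) = 4 * ρ - (1 + 4 * ρ - (r + 1) ^ 2) by ring, ← hn]
    apply v.map_sub_eq_of_lt_right
    rw [v.map_mul, hn, h4]
    exact lt_of_lt_of_le (WithTop.coe_lt_coe.2 hlt) (le_add_of_nonneg_right hρ)
  rw [v.map_mul] at hr2
  rcases lt_or_ge (v r) (v 2) with hlt' | hge
  · rw [v.map_add_eq_of_lt_left hlt'] at hr2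
    obtain ⟨m, hm⟩ := WithTop.ne_top_iff_exists.1 hlt'.ne_top
    exact ⟨m, by rw [← hm] at hr2; exact_mod_cast hr2.symm⟩
  · have hge' := add_le_add hge (v.map_le_add hge le_rfl)
    rw [hr2, h2] at hge'
    norm_cast at hge'
    lia

theorem even_of_sq_sub_mul_sq (h2 : v 2 = (e : ℤ)) (hρ : 0 ≤ v ρ)
    (hdefect : ∀ x, v (1 + 4 * ρ - x ^ 2) ≤ v 4) {x y : F} {n : ℤ}
    (hn : v (x ^ 2 - (1 + 4 * ρ) * y ^ 2) = n) : Even n := by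
  by_cases hy : y = 0
  · subst hy
    rw [zero_pow two_ne_zero, mul_zero, sub_zero, sq, v.map_mul] at hn
    lift v x to ℤ using (fun h ↦ by simp [h] at hn) with m
    exact ⟨m, by exact_mod_cast hn.symm⟩
  rw [show x ^ 2 - (1 + 4 * ρ) * y ^ 2 = -(y * y * (1 + 4 * ρ - (x / y) ^ 2)) by field_simp; ring,
    v.map_neg, v.map_mul, v.map_mul] at hn
  obtain ⟨m, hm⟩ := WithTop.ne_top_iff_exists.1 (v.ne_top_iff.2 hy)
  obtain ⟨k, hk⟩ := WithTop.ne_top_iff_exists.1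
    (show v (1 + 4 * ρ - (x / y) ^ 2) ≠ ⊤ from fun h ↦ by simp [h] at hn)
  have hkeven : Even k := even_of_map_sub_sq h2 hρ hdefect hk.symm
  rw [← hm, ← hk] at hn
  norm_cast at hn
  exact hn ▸ (Even.add_self m).add hkeven

theorem map_le_of_ddefect_eq {ord : F → WithTop ℤ} {a : F} {k : ℕ} (h : ddefect ord a = k)
    (x : F) : ord (a⁻¹ * (a - x ^ 2)) ≤ (k : ℤ) := by
  have hle : WithTop.map Int.toNat (ord (a⁻¹ * (a - x ^ 2))) ≤ (k : ℕ∞) :=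
    h ▸ le_iSup (fun x ↦ WithTop.map Int.toNat (ord (a⁻¹ * (a - x ^ 2)))) x
  cases hord : ord (a⁻¹ * (a - x ^ 2)) with
  | top =>
    rw [hord, WithTop.map_top] at hle
    exact absurd hle (WithTop.not_top_le_coe _)
  | coe m =>
    rw [hord, WithTop.map_coe] at hle
    exact WithTop.coe_le_coe.2 (Int.toNat_le.1 (WithTop.coe_le_coe.1 hle))

theorem exists_map_eq_of_ddefect_eq {ord : F → WithTop ℤ} {a : F} {k : ℕ} (hk : 0 < k)
    (h : ddefect ord a = k) : ∃ x, ord (a⁻¹ * (a - x ^ 2)) = (k : ℤ) := by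
  obtain ⟨x, hx⟩ := ENat.exists_eq_iSup_of_lt_top
    (f := fun x ↦ WithTop.map Int.toNat (ord (a⁻¹ * (a - x ^ 2))))
    (h.trans_lt (ENat.natCast_lt_top k))
  refine ⟨x, ?_⟩
  have hx' := hx.trans h
  cases hord : ord (a⁻¹ * (a - x ^ 2)) with
  | top =>
    rw [hord, WithTop.map_top] at hx'
    exact absurd hx' WithTop.top_ne_coe
  | coe m =>
    rw [hord, WithTop.map_coe] at hx'
    have hm : m.toNat = k := WithTop.coe_inj.1 hx'
    exact congrArg _ (by lia)

theorem exists_one_add_four_mul_of_ddefect_eq (he : 0 < e) (h2 : v 2 = (e : ℤ)) {Δ : F}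
    (hΔ : ddefect v Δ = (2 * e : ℕ∞)) :
    ∃ ρ d : F, v ρ = 0 ∧ d ≠ 0 ∧ Δ = (1 + 4 * ρ) * d ^ 2 ∧
      ∀ x, v (1 + 4 * ρ - x ^ 2) ≤ v 4 := by
  have h4 : v 4 = ((2 * e : ℕ) : ℤ) := map_four_of_map_two h2
  have h4ne : (4 : F) ≠ 0 := v.ne_top_iff.1 (by rw [h4]; exact WithTop.coe_ne_top)
  have hΔ' : ddefect v Δ = ((2 * e : ℕ) : ℕ∞) := by rw [hΔ]; norm_cast
  have hΔ0 : Δ ≠ 0 := by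
    rintro rfl
    have htop := map_le_of_ddefect_eq hΔ' 0
    rw [inv_zero, zero_mul, v.map_zero, top_le_iff] at htop
    exact WithTop.coe_ne_top htop
  obtain ⟨d, hd⟩ := exists_map_eq_of_ddefect_eq (by lia) hΔ'
  have hdΔ : v (d ^ 2 / Δ) = 0 := by
    rw [v.map_eq_of_lt_sub (x := 1), v.map_one]
    rw [v.map_one, v.map_sub_swap, ← div_self hΔ0, ← sub_div, div_eq_inv_mul, hd]
    exact_mod_cast (by lia : 0 < 2 * e)
  have hd0 : d ≠ 0 := by rintro rfl; simp at hdΔ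
  have hscale (x : F) : v (Δ / d ^ 2 - x ^ 2) = v (Δ⁻¹ * (Δ - (x * d) ^ 2)) := by
    rw [← zero_add (v (_ - _)), ← hdΔ, ← v.map_mul]
    congr 1
    field_simp
  refine ⟨(Δ / d ^ 2 - 1) / 4, d, ?_, hd0, by field_simp; ring, fun x ↦ ?_⟩
  · rw [v.map_div, ← one_pow 2, hscale, one_mul, hd, h4]
    exact LinearOrderedAddCommGroupWithTop.sub_self_eq_zero_of_ne_top WithTop.coe_ne_top
  · rw [mul_div_cancel₀ _ h4ne, add_sub_cancel, hscale, h4]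
    exact map_le_of_ddefect_eq hΔ' _

end QuadraticDefect

section UnramifiedNorm

variable {F : Type*} [Field F] [Algebra ℚ_[2] F] [Algebra.IsAlgebraic ℚ_[2] F]
  [Algebra ℤ_[2] F] [IsScalarTower ℤ_[2] ℚ_[2] F] {v : AddValuation F (WithTop ℤ)}

theorem exists_sq_sub_mul_sq_of_map_eq_zero (hv : ∀ z : ℤ_[2], 0 ≤ v (algebraMap ℤ_[2] F z))
    (h2 : 0 < v 2) {ρ u : F} (hρ : v ρ = 0) (hu : v u = 0) :
    ∃ x y : F, x ^ 2 - (1 + 4 * ρ) * y ^ 2 = u := by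
  have hchar : CharZero F := Algebra.charZero_of_charZero ℚ_[2] F
  have hρ0 : ρ ≠ 0 := v.ne_top_iff.1 (by simp [hρ])
  obtain ⟨p, hp⟩ := exists_map_pow_sub_pos hv h2 hu.ge
  have hp0 : v (p ^ 2) = 0 := by rw [v.map_eq_of_lt_sub (x := u), hu]; rwa [hu]
  obtain ⟨s, hs⟩ : ∃ s, s ^ 2 + -p * s + -(ρ * (p ^ 2 - u)) = 0 :=
    exists_quadratic_root_of_map_sq_lt hv (by rwa [neg_sq, hp0, v.map_neg, v.map_mul, hρ, zero_add])
  -- `x² - y² = p (p + s / ρ)` when `x = p + y` and `y = s / (2ρ)`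
  refine ⟨p + s / ρ / 2, s / ρ / 2, ?_⟩
  field_simp
  linear_combination -4 * ρ * hs

theorem exists_sq_sub_mul_sq_of_map_eq_map_sq (hv : ∀ z : ℤ_[2], 0 ≤ v (algebraMap ℤ_[2] F z))
    (h2 : 0 < v 2) {ρ w t : F} (hρ : v ρ = 0) (ht : t ≠ 0) (hw : v w = v (t ^ 2)) :
    ∃ x y : F, x ^ 2 - (1 + 4 * ρ) * y ^ 2 = w := by
  have hu : v (w / t ^ 2) = 0 := by
    rw [v.map_div, hw, LinearOrderedAddCommGroupWithTop.sub_self_eq_zero_of_ne_top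
      (v.ne_top_iff.2 (pow_ne_zero 2 ht))]
  obtain ⟨x, y, hxy⟩ := exists_sq_sub_mul_sq_of_map_eq_zero hv h2 hρ hu
  refine ⟨x * t, y * t, ?_⟩
  rw [eq_div_iff (pow_ne_zero 2 ht)] at hxy
  linear_combination hxy

end UnramifiedNorm

namespace IsDyadicOrd

variable {F : Type*} [Field F] [Algebra ℚ_[2] F] {ord : F → WithTop ℤ}

/-- The order function as a bundled valuation. -/
def addValuation (h : IsDyadicOrd ord) : AddValuation F (WithTop ℤ) :=
  AddValuation.of ord h.map_zero (by
    simpa using h.compat 1 one_ne_zero (by simp)) h.min_le_add h.map_mul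

variable (h : IsDyadicOrd ord)
include h

section PadicIntAlgebra

variable [Algebra ℤ_[2] F] [IsScalarTower ℤ_[2] ℚ_[2] F]

theorem addValuation_algebraMap_of_isUnit {z : ℤ_[2]} (hz : IsUnit z) :
    h.addValuation (algebraMap ℤ_[2] F z) = 0 := by
  rw [IsScalarTower.algebraMap_apply ℤ_[2] ℚ_[2] F]
  refine h.compat z (by simpa using hz.ne_zero) ?_
  rw [PadicInt.valuation_coe]
  have hnorm := PadicInt.isUnit_iff.1 hz
  rw [PadicInt.norm_eq_zpow_neg_valuation hz.ne_zero,
    zpow_eq_one_iff_right₀ (by norm_num) (by norm_num)] at hnorm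
  simpa using hnorm

theorem addValuation_algebraMap_nonneg (z : ℤ_[2]) :
    0 ≤ h.addValuation (algebraMap ℤ_[2] F z) := by
  rcases IsLocalRing.isUnit_or_isUnit_one_sub_self z with hz | hz
  · exact (h.addValuation_algebraMap_of_isUnit hz).ge
  · rw [← sub_sub_cancel 1 z, map_sub, map_one]
    exact h.addValuation.map_le_sub h.addValuation.map_one.ge
      (h.addValuation_algebraMap_of_isUnit hz).ge

theorem addValuation_two_pos [Algebra.IsAlgebraic ℚ_[2] F] : 0 < h.addValuation 2 := by
  have hv := h.addValuation_algebraMap_nonneg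
  refine lt_of_le_of_ne (by simpa only [map_ofNat] using hv 2) fun h2 ↦ ?_
  have hℚ (q : ℚ_[2]) : 0 ≤ h.addValuation (algebraMap ℚ_[2] F q) := by
    obtain ⟨n, hn⟩ := pow_unbounded_of_one_lt ‖q‖ one_lt_two
    have hnorm : ‖q * 2 ^ n‖ ≤ 1 := by
      have h2norm : ‖(2 : ℚ_[2])‖ = 2⁻¹ := by simpa using Padic.norm_p (p := 2)
      rw [norm_mul, norm_pow, h2norm, inv_pow]
      exact mul_inv_le_one_of_le₀ hn.le (by positivity)
    obtain ⟨z, hz⟩ : ∃ z : ℤ_[2], algebraMap ℤ_[2] ℚ_[2] z = q * 2 ^ n := ⟨⟨_, hnorm⟩, rfl⟩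
    have hz0 : 0 ≤ h.addValuation (algebraMap ℤ_[2] F z) := hv z
    rwa [IsScalarTower.algebraMap_apply ℤ_[2] ℚ_[2] F, hz, _root_.map_mul, map_pow, map_ofNat,
      AddValuation.map_mul, AddValuation.map_pow, ← h2, smul_zero, add_zero] at hz0
  obtain ⟨x, hx⟩ := h.surj (-1)
  have hnonneg : 0 ≤ ord x :=
    map_nonneg_of_isIntegral h.addValuation hℚ (Algebra.IsIntegral.isIntegral x)
  exact absurd (hx ▸ hnonneg) (by decide)

end PadicIntAlgebra

theorem exists_sq_sub_mul_sq_eq_iff_even [Algebra.IsAlgebraic ℚ_[2] F] {e : ℕ}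
    (he : ord 2 = (e : ℤ)) {Δ : F} (hΔ : ddefect ord Δ = (2 * e : ℕ∞)) {w : F} {n : ℤ}
    (hw : ord w = n) : (∃ x y, x ^ 2 - Δ * y ^ 2 = w) ↔ Even n := by
  let : Algebra ℤ_[2] F := Algebra.compHom F (algebraMap ℤ_[2] ℚ_[2])
  have : IsScalarTower ℤ_[2] ℚ_[2] F := .of_algebraMap_eq' rfl
  have h2pos : 0 < ord 2 := h.addValuation_two_pos
  have hepos : 0 < e := by
    rw [he] at h2pos
    exact_mod_cast h2pos
  obtain ⟨ρ, d, hρ, hd, rfl, hdefect⟩ :=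
    exists_one_add_four_mul_of_ddefect_eq (v := h.addValuation) hepos he hΔ
  constructor
  · rintro ⟨x, y, rfl⟩
    rw [mul_assoc, ← mul_pow] at hw
    exact even_of_sq_sub_mul_sq (v := h.addValuation) he hρ.ge hdefect hw
  · rintro ⟨m, rfl⟩
    obtain ⟨t, ht⟩ := h.surj m
    have ht0 : t ≠ 0 := fun h0 ↦ by simp [h0, h.map_zero] at ht
    have hwt : ord w = ord (t ^ 2) := by rw [hw, sq, h.map_mul, ht, WithTop.coe_add]
    obtain ⟨x, y, hxy⟩ := exists_sq_sub_mul_sq_of_map_eq_map_sq h.addValuation_algebraMap_nonneg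
      h2pos hρ ht0 hwt
    exact ⟨x, y / d, by rw [← hxy, div_pow]; field_simp⟩

end IsDyadicOrd

section IsotropicForms

variable {F : Type*} [Field F]

/-- `a` and `b` are the coefficients of an isotropic binary diagonal form `[a, b]`. -/
def IsotropicBinary (a b : F) : Prop :=
  ∃ x y : F, (x, y) ≠ (0, 0) ∧ a * x ^ 2 + b * y ^ 2 = 0

/-- `a`, `b` and `c` are the coefficients of an isotropic ternary diagonal form `[a, b, c]`. -/
def IsotropicTernary (a b c : F) : Prop :=
  ∃ x y z : F, (x, y, z) ≠ (0, 0, 0) ∧ a * x ^ 2 + b * y ^ 2 + c * z ^ 2 = 0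

theorem IsotropicBinary.isotropicTernary {a b : F} (h : IsotropicBinary a b) (c : F) :
    IsotropicTernary a b c := by
  obtain ⟨x, y, hxy, h0⟩ := h
  exact ⟨x, y, 0, by simpa using hxy, by linear_combination h0⟩

theorem isotropicBinary_of_neg_mul_eq_sq {a b c : F} (ha : a ≠ 0) (h : -(a * b) = c ^ 2) :
    IsotropicBinary a b :=
  ⟨c, a, by simp [ha], by linear_combination -a * h⟩

theorem isotropicTernary_iff {a₁ a₂ a₃ c δ : F} (h₁ : a₁ ≠ 0) (hc : c ≠ 0)
    (hδ : -(a₁ * a₂) = δ * c ^ 2) :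
    IsotropicTernary a₁ a₂ a₃ ↔
      IsotropicBinary a₁ a₂ ∨ ∃ x y, x ^ 2 - δ * y ^ 2 = -(a₁ * a₃) := by
  constructor
  · rintro ⟨x, y, z, hxyz, h0⟩
    by_cases hz : z = 0
    · subst hz
      exact .inl ⟨x, y, by simpa using hxyz, by linear_combination h0⟩
    · refine .inr ⟨a₁ * x / z, c * y / z, ?_⟩
      field_simp
      linear_combination a₁ * h0 + y ^ 2 * hδ
  · rintro (h | ⟨x, y, hxy⟩)
    · exact h.isotropicTernary a₃
    · refine ⟨x / a₁, y / c, 1, by simp, mul_left_cancel₀ h₁ ?_⟩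
      field_simp
      linear_combination c ^ 2 * hxy - y ^ 2 * hδ

end IsotropicForms

theorem stmt9_general {F : Type*} [Field F] [Algebra ℚ_[2] F] [Algebra.IsAlgebraic ℚ_[2] F]
    (ord : F → WithTop ℤ) (hv : IsDyadicOrd ord)
    (e : ℕ) (he : ord (2 : F) = ((e : ℤ) : WithTop ℤ))
    (Δ : F) (hΔd : ddefect ord Δ = (2 * e : ℕ∞)) (a₁ a₂ a₃ : F)
    (n : ℤ) (hn : ord (a₁ * a₃) = n)
    (hsq : (∃ c : F, -(a₁ * a₂) = c ^ 2) ∨ (∃ c : F, -(a₁ * a₂) = Δ * c ^ 2)) :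
    (Even n → IsotropicTernary a₁ a₂ a₃) ∧
      (Odd n → (IsotropicTernary a₁ a₂ a₃ ↔ IsotropicBinary a₁ a₂)) := by
  by_cases hbin : IsotropicBinary a₁ a₂
  · simp only [hbin, hbin.isotropicTernary, implies_true, and_self]
  have h₁ : a₁ ≠ 0 := by
    rintro rfl
    simp [hv.map_zero] at hn
  have hnsq (c : F) : -(a₁ * a₂) ≠ c ^ 2 := fun h ↦ hbin (isotropicBinary_of_neg_mul_eq_sq h₁ h)
  obtain ⟨c, hc⟩ := hsq.resolve_left fun ⟨c, hc⟩ ↦ hnsq c hc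
  have hc0 : c ≠ 0 := fun h0 ↦ hnsq 0 (by simp [hc, h0])
  have hn' : ord (-(a₁ * a₃)) = n := (hv.addValuation.map_neg _).trans hn
  rw [isotropicTernary_iff h₁ hc0 hc, or_iff_right hbin, iff_false_right hbin,
    hv.exists_sq_sub_mul_sq_eq_iff_even he hΔd hn', Int.not_even_iff_odd]
  exact ⟨id, id⟩

/-- if `ord a₁ = 0`, `ord a₂ = -2e` and `-a₁a₂ ∈ (Fˣ)² ∪ Δ(Fˣ)²`, then:
if `ord a₃ = 0` the form `[a₁,a₂,a₃]` is isotropic, and if `ord a₃ = 1`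
then `[a₁,a₂,a₃]` is isotropic iff `[a₁,a₂]` is. -/
theorem stmt9 {F : Type*} [Field F] [Algebra ℚ_[2] F] [FiniteDimensional ℚ_[2] F]
    (ord : F → WithTop ℤ) (hv : IsDyadicOrd ord)
    (e : ℕ) (he : ord (2 : F) = ((e : ℤ) : WithTop ℤ))
    (Δ : F) (hΔu : ord Δ = 0) (hΔd : ddefect ord Δ = (2 * e : ℕ∞))
    (a₁ a₂ a₃ : F) (h₁ : a₁ ≠ 0) (h₂ : a₂ ≠ 0) (h₃ : a₃ ≠ 0)
    (hR₁ : ord a₁ = 0) (hR₂ : ord a₂ = ((-(2 * (e : ℤ)) : ℤ) : WithTop ℤ))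
    (hsq : (∃ c : F, -(a₁ * a₂) = c ^ 2) ∨ (∃ c : F, -(a₁ * a₂) = Δ * c ^ 2)) :
    (ord a₃ = 0 →
      ∃ x y z : F, (x, y, z) ≠ (0, 0, 0) ∧
        a₁ * x ^ 2 + a₂ * y ^ 2 + a₃ * z ^ 2 = 0) ∧
    (ord a₃ = ((1 : ℤ) : WithTop ℤ) →
      ((∃ x y z : F, (x, y, z) ≠ (0, 0, 0) ∧
          a₁ * x ^ 2 + a₂ * y ^ 2 + a₃ * z ^ 2 = 0) ↔
        ∃ x y : F, (x, y) ≠ (0, 0) ∧ a₁ * x ^ 2 + a₂ * y ^ 2 = 0)) := by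
  have hgen (n : ℤ) (h : ord a₃ = n) :=
    stmt9_general ord hv e he Δ hΔd a₁ a₂ a₃ n (by rw [hv.map_mul, hR₁, h, zero_add]) hsq
  exact ⟨fun h ↦ (hgen 0 h).1 Even.zero, fun h ↦ (hgen 1 h).2 odd_one⟩
end
end

section
/- Let $F$ be a dyadic local field. For a unit $\varepsilon \in \mathcal{O}^\times$, the value $d(\varepsilon) = \mathrm{ord}(\mathfrak{d}(\varepsilon))$ lies in the set $\{1, 3, 5, \ldots, 2e-1, 2e, \infty\}$; in particular, if $d(\varepsilon)$ is even and finite then $d(\varepsilon) = 2e$. -/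
noncomputable section

/-!
Let `x ^ 2` approximate the unit `ε` as well as possible, with `ord (ε - x ^ 2) = N` finite.
If `N > 2 * e`, the Newton step from `x` to `x + (ε - x ^ 2) / (2 * x)` leaves an error
`-((ε - x ^ 2) / (2 * x)) ^ 2`, of order `2 * N - 2 * e > N`. If `N = 2 * k < 2 * e`, choose `π` of
order `k`; as the residue field is perfect, the unit `(ε - x ^ 2) / π ^ 2` is congruent to a square
`y ^ 2`, and since `2 * x * π * y` has order greater than `2 * k`, the square of `x + π * y` is
closer to `ε`. Both contradict the choice of `x`, so `N` is either odd and less than `2 * e`, or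
equal to `2 * e`.

The residue field of `F` is perfect because it is algebraic over the residue field of `ℤ_[2]`: an
algebraic equation over `ℤ_[2]` can be made primitive, and then it survives reduction.
-/

open IsLocalRing Polynomial LinearOrderedAddCommGroupWithTop

section ResidueField

theorem exists_isPrimitive_aeval_eq_zero {R A : Type*} [CommRing R] [IsDomain R] [IsBezout R]
    [Ring A] [IsDomain A] [Algebra R A] [Module.IsTorsionFree R A] {x : A} (hx : IsAlgebraic R x) :
    ∃ p : R[X], p.IsPrimitive ∧ aeval x p = 0 := by
  let : NormalizedGCDMonoid R := Classical.choice inferInstance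
  obtain ⟨p, hp, hpx⟩ := hx
  exact ⟨p.primPart, p.isPrimitive_primPart, aeval_primPart_eq_zero hp hpx⟩

theorem map_residue_ne_zero_of_isPrimitive {R : Type*} [CommRing R] [IsLocalRing R] [IsBezout R]
    {p : R[X]} (hp : p.IsPrimitive) : p.map (residue R) ≠ 0 := by
  intro h
  have hle : p.contentIdeal ≤ RingHom.ker (residue R) := by
    rw [← Ideal.map_eq_bot_iff_le_ker, ← contentIdeal_map_eq_map_contentIdeal, h, contentIdeal_zero]
  rw [(isPrimitive_iff_contentIdeal_eq_top p).1 hp, top_le_iff] at hle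
  exact RingHom.ker_ne_top _ hle

theorem residueField_isAlgebraic {R S : Type*} [CommRing R] [IsDomain R] [ValuationRing R]
    [CommRing S] [IsDomain S] [IsLocalRing S] [Algebra R S] [Module.IsTorsionFree R S]
    [IsLocalHom (algebraMap R S)] [Algebra.IsAlgebraic R S] :
    Algebra.IsAlgebraic (ResidueField R) (ResidueField S) where
  isAlgebraic t := by
    obtain ⟨x, rfl⟩ := residue_surjective t
    obtain ⟨p, hp, hpx⟩ :=
      exists_isPrimitive_aeval_eq_zero (Algebra.IsAlgebraic.isAlgebraic (R := R) x)
    refine ⟨p.map (residue R), map_residue_ne_zero_of_isPrimitive hp, ?_⟩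
    rw [← ResidueField.algebraMap_eq R, ← ResidueField.algebraMap_eq S, aeval_map_algebraMap,
      aeval_algebraMap_apply, hpx, map_zero]

end ResidueField

section AddValuation

variable {F Γ₀ : Type*} [Field F] [LinearOrderedAddCommGroupWithTop Γ₀] (v : AddValuation F Γ₀)

theorem mem_maximalIdeal_valuationSubring_iff (x : v.toValuation.valuationSubring) :
    x ∈ maximalIdeal v.toValuation.valuationSubring ↔ 0 < v x := by
  rw [ValuationSubring.valuation_lt_one_iff,
    ← v.toValuation.isEquiv_valuation_valuationSubring.lt_one_iff_lt_one]
  exact Iff.rfl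

theorem exists_sq_sub_pos [PerfectField (ResidueField v.toValuation.valuationSubring)]
    (h2 : 0 < v 2) {u : F} (hu : 0 ≤ v u) : ∃ y, 0 < v (u - y ^ 2) := by
  let O := v.toValuation.valuationSubring
  have two_eq_zero : (2 : ResidueField O) = 0 := by
    rw [← map_ofNat (residue O) 2, residue_eq_zero_iff, mem_maximalIdeal_valuationSubring_iff]
    exact h2
  have : CharP (ResidueField O) 2 := CharTwo.of_one_ne_zero_of_two_eq_zero one_ne_zero two_eq_zero
  obtain ⟨t, ht⟩ := surjective_frobenius (ResidueField O) 2 (residue O ⟨u, hu⟩)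
  obtain ⟨y, rfl⟩ := residue_surjective t
  refine ⟨y, (mem_maximalIdeal_valuationSubring_iff v (⟨u, hu⟩ - y ^ 2)).1 ?_⟩
  rw [← residue_eq_zero_iff, map_sub, map_pow, ← ht, frobenius_def, sub_self]

theorem map_zpow_eq_zsmul (x : F) (n : ℤ) : v (x ^ n) = n • v x :=
  map_zpow₀ v.toValuation x n

theorem nonneg_of_isAlgebraic {K : Type*} [Field K] [Algebra K F] [Algebra.IsAlgebraic K F]
    (hK : ∀ a : K, 0 ≤ v (algebraMap K F a)) (x : F) : 0 ≤ v x := by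
  let f : K →+* v.toValuation.integer := (algebraMap K F).codRestrict _ hK
  obtain ⟨p, hp, hpx⟩ := Algebra.IsIntegral.isIntegral (R := K) x
  refine (Valuation.integer.integers v.toValuation).mem_of_integral ⟨p.map f, hp.map f, ?_⟩
  rw [eval₂_map]
  exact hpx

variable {v}

theorem eq_zero_of_sub_sq_pos {ε x : F} (hε : v ε = 0) (h : 0 < v (ε - x ^ 2)) : v x = 0 := by
  have hsq : v (x ^ 2) = 0 := by
    rw [← hε, ← sub_sub_cancel ε (x ^ 2)]
    exact v.map_sub_eq_of_lt_left (hε.symm ▸ h)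
  rw [v.map_pow, two_nsmul] at hsq
  obtain hneg | hzero | hpos := lt_trichotomy (v x) 0
  · exact absurd hsq (add_neg_of_neg_of_nonpos hneg hneg.le).ne
  · exact hzero
  · exact absurd hsq (add_pos_of_pos_of_nonneg hpos hpos.le).ne'

theorem exists_lt_sub_sq_of_two_nsmul_lt {ε x : F} (h : 2 • v (2 * x) < v (ε - x ^ 2))
    (hne : ε ≠ x ^ 2) : ∃ z, v (ε - x ^ 2) < v (ε - z ^ 2) := by
  have h2x : v (2 * x) ≠ ⊤ := by
    intro htop
    simp [htop, two_nsmul] at h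
  have h2x0 : 2 * x ≠ 0 := v.ne_top_iff.1 h2x
  obtain ⟨h20, hx0⟩ := mul_ne_zero_iff.1 h2x0
  set w := (ε - x ^ 2) / (2 * x) with hw
  have hmul : v (ε - x ^ 2) = v (2 * x) + v w := by
    rw [← v.map_mul, hw, mul_div_cancel₀ _ h2x0]
  have hlt : v (2 * x) < v w := by
    rwa [hmul, two_nsmul, add_lt_add_iff_right_of_ne_top h2x] at h
  have hwtop : v w ≠ ⊤ := v.ne_top_iff.2 (div_ne_zero (sub_ne_zero.2 hne) h2x0)
  have newton : ε - (x + w) ^ 2 = -w ^ 2 := by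
    rw [hw]
    field_simp
    ring
  refine ⟨x + w, ?_⟩
  rw [newton, v.map_neg, v.map_pow, hmul, two_nsmul]
  exact (add_lt_add_iff_left_of_ne_top hwtop).2 hlt

theorem exists_lt_sub_sq_of_eq_two_nsmul {ε x π : F} (hx : 0 ≤ v x) (hπ : v π < v 2)
    (h : v (ε - x ^ 2) = 2 • v π) (hres : ∀ u, v u = 0 → ∃ y, 0 < v (u - y ^ 2)) :
    ∃ z, v (ε - x ^ 2) < v (ε - z ^ 2) := by
  have hπtop : v π ≠ ⊤ := (hπ.trans_le le_top).ne
  have hπ0 : π ≠ 0 := v.ne_top_iff.1 hπtop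
  have hsqtop : v (π ^ 2) ≠ ⊤ := v.ne_top_iff.2 (pow_ne_zero 2 hπ0)
  have hu : v ((ε - x ^ 2) / π ^ 2) = 0 := by
    rw [v.map_div, h, ← v.map_pow, sub_self_eq_zero_of_ne_top hsqtop]
  obtain ⟨y, hy⟩ := hres _ hu
  have hxy : 0 ≤ v (x * y) := by
    rw [v.map_mul, eq_zero_of_sub_sq_pos hu hy, add_zero]
    exact hx
  have expand : ε - (x + π * y) ^ 2 =
      π ^ 2 * ((ε - x ^ 2) / π ^ 2 - y ^ 2) - π * 2 * (x * y) := by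
    field_simp
    ring
  refine ⟨x + π * y, ?_⟩
  rw [expand, h, ← v.map_pow]
  refine (lt_min ?_ ?_).trans_le (v.map_sub _ _)
  · simpa only [v.map_mul, add_zero] using
      (add_lt_add_iff_right_of_ne_top hsqtop).2 hy
  · calc v (π ^ 2) = v π + v π := by rw [v.map_pow, two_nsmul]
      _ < v π + v 2 := (add_lt_add_iff_right_of_ne_top hπtop).2 hπ
      _ ≤ v (π * 2 * (x * y)) := by
        rw [v.map_mul, v.map_mul π 2]
        exact le_add_of_nonneg_right hxy

end AddValuation

section Ddefect

/-- Orders truncated below at `0`, the scale on which `ddefect` measures approximations. -/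
def truncENat (a : WithTop ℤ) : ℕ∞ :=
  WithTop.map Int.toNat a

theorem truncENat_le_natCast {a : WithTop ℤ} {N : ℕ} :
    truncENat a ≤ N ↔ a ≤ ((N : ℤ) : WithTop ℤ) := by
  induction a with
  | top => exact iff_of_false (ENat.natCast_ne_top N ∘ top_le_iff.1) (by simp)
  | coe a => exact ENat.natCast_le_natCast.trans (Int.toNat_le.trans WithTop.coe_le_coe.symm)

theorem truncENat_eq_natCast {a : WithTop ℤ} {N : ℕ} (hN : N ≠ 0) :
    truncENat a = N ↔ a = ((N : ℤ) : WithTop ℤ) := by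
  induction a with
  | top => exact iff_of_false (ENat.top_ne_natCast N) WithTop.top_ne_coe
  | coe a =>
    have htoNat : a.toNat = N ↔ a = N := by lia
    exact ENat.natCast_inj.trans (htoNat.trans WithTop.coe_inj.symm)

variable {F : Type*} [Field F] {v : AddValuation F (WithTop ℤ)} {ε : F}

theorem ddefect_eq_iSup_truncENat (hε : v ε = 0) :
    ddefect v ε = ⨆ x, truncENat (v (ε - x ^ 2)) := by
  simp only [ddefect, truncENat, v.map_mul, v.map_inv, hε, neg_zero, zero_add]

theorem sub_sq_le_of_ddefect_eq (hε : v ε = 0) {N : ℕ} (hN : ddefect v ε = N) (x : F) :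
    v (ε - x ^ 2) ≤ ((N : ℤ) : WithTop ℤ) := by
  rw [← truncENat_le_natCast, ← hN, ddefect_eq_iSup_truncENat hε]
  exact le_iSup (fun x ↦ truncENat (v (ε - x ^ 2))) x

theorem exists_sub_sq_eq_of_ddefect_eq (hε : v ε = 0) {N : ℕ} (hN : ddefect v ε = N) :
    ∃ x, 0 ≤ v x ∧ v (ε - x ^ 2) = ((N : ℤ) : WithTop ℤ) := by
  obtain rfl | hN0 := eq_or_ne N 0
  · exact ⟨0, by simp, by simpa using hε⟩
  · rw [ddefect_eq_iSup_truncENat hε] at hN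
    obtain ⟨x, hx⟩ := ENat.exists_eq_iSup_of_lt_top (hN ▸ ENat.natCast_lt_top N)
    have hxN := (truncENat_eq_natCast hN0).1 (hx.trans hN)
    have hpos : 0 < v (ε - x ^ 2) := by
      rw [hxN]
      exact_mod_cast Nat.pos_of_ne_zero hN0
    exact ⟨x, (eq_zero_of_sub_sq_pos hε hpos).ge, hxN⟩

theorem le_two_mul_of_ddefect_eq (hε : v ε = 0) {e N : ℕ} (he : v 2 = ((e : ℤ) : WithTop ℤ))
    (hN : ddefect v ε = N) : N ≤ 2 * e := by
  by_contra! hlt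
  obtain ⟨x, -, hx⟩ := exists_sub_sq_eq_of_ddefect_eq hε hN
  have hvx : v x = 0 := by
    refine eq_zero_of_sub_sq_pos hε ?_
    rw [hx]
    exact_mod_cast (Nat.zero_le _).trans_lt hlt
  have hnear : 2 • v (2 * x) < v (ε - x ^ 2) := by
    rw [v.map_mul, he, hvx, add_zero, hx, two_nsmul]
    rw [two_mul] at hlt
    exact_mod_cast hlt
  have hne : ε ≠ x ^ 2 := by
    rintro rfl
    simp at hx
  obtain ⟨z, hz⟩ := exists_lt_sub_sq_of_two_nsmul_lt hnear hne
  exact (hz.trans_le (sub_sq_le_of_ddefect_eq hε hN z)).ne hx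

theorem eq_of_ddefect_eq_two_mul [PerfectField (ResidueField v.toValuation.valuationSubring)]
    (hv : ∀ n : ℤ, ∃ x, v x = n) (hε : v ε = 0) {e k : ℕ} (he : v 2 = ((e : ℤ) : WithTop ℤ))
    (hk : ddefect v ε = (2 * k : ℕ)) : k = e := by
  by_contra hne
  have hlt : k < e := lt_of_le_of_ne (by linarith [le_two_mul_of_ddefect_eq hε he hk]) hne
  obtain ⟨x, hx, hxk⟩ := exists_sub_sq_eq_of_ddefect_eq hε hk
  obtain ⟨π, hπ⟩ := hv k
  have hπ2 : v π < v 2 := by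
    rw [hπ, he]
    exact_mod_cast hlt
  have heven : v (ε - x ^ 2) = 2 • v π := by
    rw [hxk, hπ]
    norm_cast
  have h2 : 0 < v 2 := by
    rw [he]
    exact_mod_cast (Nat.zero_le k).trans_lt hlt
  obtain ⟨z, hz⟩ := exists_lt_sub_sq_of_eq_two_nsmul hx hπ2 heven
    fun u hu ↦ exists_sq_sub_pos v h2 hu.ge
  exact (hz.trans_le (sub_sq_le_of_ddefect_eq hε hk z)).ne hxk

end Ddefect

theorem stmt13_general {F : Type*} [Field F] (v : AddValuation F (WithTop ℤ))
    [PerfectField (ResidueField v.toValuation.valuationSubring)] (hv : ∀ n : ℤ, ∃ x, v x = n)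
    (e : ℕ) (he : v 2 = ((e : ℤ) : WithTop ℤ)) (ε : F) (hε : v ε = 0) :
    (ddefect v ε = ⊤ ∨ ddefect v ε = (2 * e : ℕ∞) ∨
      ∃ k : ℕ, ddefect v ε = (2 * k + 1 : ℕ∞) ∧ 2 * k + 1 ≤ 2 * e - 1) ∧
    (∀ k : ℕ, ddefect v ε = (2 * k : ℕ∞) → ddefect v ε = (2 * e : ℕ∞)) := by
  have even (k : ℕ) (hk : ddefect v ε = (2 * k : ℕ∞)) : ddefect v ε = (2 * e : ℕ∞) :=
    eq_of_ddefect_eq_two_mul hv hε he (hk.trans (by norm_cast)) ▸ hk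
  refine ⟨or_iff_not_imp_left.2 fun htop ↦ ?_, even⟩
  obtain ⟨N, hN⟩ := ENat.ne_top_iff_exists.1 htop
  obtain ⟨k, rfl | rfl⟩ := N.even_or_odd'
  · exact .inl (even k (by rw [← hN]; norm_cast))
  · have hle := le_two_mul_of_ddefect_eq hε he hN.symm
    exact .inr ⟨k, by rw [← hN]; norm_cast, by lia⟩

namespace IsDyadicOrd

variable {F : Type*} [Field F] [Algebra ℚ_[2] F] {ord : F → WithTop ℤ}

theorem map_one (hv : IsDyadicOrd ord) : ord 1 = 0 := by
  have h := hv.map_mul 1 1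
  rw [mul_one] at h
  exact (add_right_injective_of_ne_top _ (hv.ne_top 1 one_ne_zero) (by simpa using h)).symm

variable (hv : IsDyadicOrd ord)

/-- `ord` as a bundled additive valuation. -/
def addVal : AddValuation F (WithTop ℤ) :=
  .of ord hv.map_zero hv.map_one hv.min_le_add hv.map_mul

theorem addVal_algebraMap {q : ℚ_[2]} (hq : q ≠ 0) :
    hv.addVal (algebraMap ℚ_[2] F q) = q.valuation • hv.addVal 2 := by
  have h2 : (2 : ℚ_[2]) ^ q.valuation ≠ 0 := zpow_ne_zero _ two_ne_zero
  have hunit : hv.addVal (algebraMap ℚ_[2] F (q / 2 ^ q.valuation)) = 0 := by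
    refine hv.compat _ (div_ne_zero hq h2) ?_
    have hval2 : (2 : ℚ_[2]).valuation = 1 := Padic.valuation_p (p := 2)
    rw [div_eq_mul_inv, Padic.valuation_mul hq (inv_ne_zero h2), Padic.valuation_inv,
      Padic.valuation_zpow, hval2, mul_one, add_neg_cancel]
  calc hv.addVal (algebraMap ℚ_[2] F q)
      = hv.addVal (algebraMap ℚ_[2] F (q / 2 ^ q.valuation) * 2 ^ q.valuation) := by
        rw [← map_ofNat (algebraMap ℚ_[2] F) 2, ← map_zpow₀, ← _root_.map_mul, div_mul_cancel₀ q h2]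
    _ = q.valuation • hv.addVal 2 := by
        rw [hv.addVal.map_mul, hunit, zero_add, map_zpow_eq_zsmul]

theorem addVal_two_nonneg : 0 ≤ hv.addVal 2 := by
  simpa only [one_add_one_eq_two, hv.addVal.map_one, min_self] using hv.addVal.map_add 1 1

theorem addVal_two_pos [Algebra.IsAlgebraic ℚ_[2] F] : 0 < hv.addVal 2 := by
  refine hv.addVal_two_nonneg.lt_of_ne fun h ↦ ?_
  obtain ⟨x, hx⟩ := hv.surj (-1)
  have hx0 : 0 ≤ hv.addVal x := by
    refine nonneg_of_isAlgebraic hv.addVal (fun q : ℚ_[2] ↦ ?_) x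
    obtain rfl | hq := eq_or_ne q 0
    · simp
    · rw [hv.addVal_algebraMap hq, ← h, smul_zero]
  exact absurd (hx0.trans_eq hx) (by decide)

theorem addVal_algebraMap_padicInt_nonneg (a : ℤ_[2]) :
    0 ≤ hv.addVal (algebraMap ℚ_[2] F a) := by
  obtain rfl | ha := eq_or_ne a 0
  · simp
  · rw [hv.addVal_algebraMap (PadicInt.coe_ne_zero.2 ha), PadicInt.valuation_coe, natCast_zsmul]
    exact nsmul_nonneg hv.addVal_two_nonneg _

/-- The inclusion of `ℤ_[2]` into the ring of integers of `F`. -/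
def padicIntToIntegers : ℤ_[2] →+* hv.addVal.toValuation.valuationSubring :=
  ((algebraMap ℚ_[2] F).comp (algebraMap ℤ_[2] ℚ_[2])).codRestrict _
    hv.addVal_algebraMap_padicInt_nonneg

theorem padicIntToIntegers_injective : Function.Injective hv.padicIntToIntegers :=
  Function.Injective.of_comp (f := Subtype.val)
    ((algebraMap ℚ_[2] F).injective.comp (IsFractionRing.injective ℤ_[2] ℚ_[2]))

theorem isLocalHom_padicIntToIntegers [Algebra.IsAlgebraic ℚ_[2] F] :
    IsLocalHom hv.padicIntToIntegers := by
  have hle : (maximalIdeal ℤ_[2]).map hv.padicIntToIntegers ≤ maximalIdeal _ := by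
    rw [PadicInt.maximalIdeal_eq_span_p, Ideal.map_span, Set.image_singleton,
      Ideal.span_singleton_le_iff_mem, mem_maximalIdeal_valuationSubring_iff, map_natCast]
    exact hv.addVal_two_pos
  exact ((local_hom_TFAE hv.padicIntToIntegers).out 0 2).2 hle

theorem perfectField_residueField [Algebra.IsAlgebraic ℚ_[2] F] :
    PerfectField (ResidueField hv.addVal.toValuation.valuationSubring) := by
  let O := hv.addVal.toValuation.valuationSubring
  let : Algebra ℤ_[2] O := hv.padicIntToIntegers.toAlgebra
  let : Algebra ℤ_[2] F := ((algebraMap ℚ_[2] F).comp (algebraMap ℤ_[2] ℚ_[2])).toAlgebra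
  have : IsScalarTower ℤ_[2] ℚ_[2] F := .of_algebraMap_eq fun _ ↦ rfl
  have : IsScalarTower ℤ_[2] O F := .of_algebraMap_eq fun _ ↦ rfl
  have : FaithfulSMul ℤ_[2] O := (faithfulSMul_iff_algebraMap_injective _ _).2
    hv.padicIntToIntegers_injective
  have : Algebra.IsAlgebraic ℤ_[2] F :=
    IsFractionRing.comap_isAlgebraic_iff.2 ‹Algebra.IsAlgebraic ℚ_[2] F›
  have : Algebra.IsAlgebraic ℤ_[2] O :=
    .of_injective (IsScalarTower.toAlgHom ℤ_[2] O F) Subtype.val_injective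
  have : IsLocalHom (algebraMap ℤ_[2] O) := hv.isLocalHom_padicIntToIntegers
  have : Finite (ResidueField ℤ_[2]) := .of_equiv _ PadicInt.residueField.symm.toEquiv
  have := residueField_isAlgebraic (R := ℤ_[2]) (S := O)
  exact Algebra.IsAlgebraic.perfectField (ResidueField ℤ_[2])

end IsDyadicOrd

/-- for a unit `ε`, `d(ε) ∈ {1,3,…,2e-1, 2e, ∞}`; in particular
if `d(ε)` is even and finite then `d(ε) = 2e`. -/
theorem stmt13 {F : Type*} [Field F] [Algebra ℚ_[2] F] [FiniteDimensional ℚ_[2] F]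
    (ord : F → WithTop ℤ) (hv : IsDyadicOrd ord)
    (e : ℕ) (he : ord (2 : F) = ((e : ℤ) : WithTop ℤ))
    (ε : F) (hε : ord ε = 0) :
    (ddefect ord ε = ⊤ ∨ ddefect ord ε = (2 * e : ℕ∞) ∨
      ∃ k : ℕ, ddefect ord ε = (2 * k + 1 : ℕ∞) ∧ 2 * k + 1 ≤ 2 * e - 1) ∧
    (∀ k : ℕ, ddefect ord ε = (2 * k : ℕ∞) → ddefect ord ε = (2 * e : ℕ∞)) := by
  have := hv.perfectField_residueField
  exact stmt13_general hv.addVal hv.surj e he ε hε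
end
end
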